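/- Let n ≥ 0, k = ⌊n/2⌋, let d_0,…,d_k ≥ 0 with m = Σ_{j=0}^k (j+1)d_j, and suppose Q_n(d_0,…,d_k) is nonempty. Define 𝔥 = (h_0,…,h_n) by h_i = 0 for all odd i (and h_n = 0 if n is odd) and h_{2i} = Σ_{j=i}^k d_j for 0 ≤ i ≤ k. Then 𝔥 ∈ Q_n(d_0,…,d_k), and every 𝔞 ∈ Q_n(d_0,…,d_k) with 𝔞 ≠ 𝔥 satisfies rk(𝔞) > rk(𝔥); that is, 𝔥 is the unique element of Q_n(d_0,…,d_k) of minimal rank (equivalently, of highest weight). -/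

import Mathlib

/- Common definitions following K. O'Hara's spread/degree and the signature
   refinement; elements of A_n(m) are lists of naturals of length n+1 and sum m. -/

namespace OHara

/-- The spread of `a = (a_0, …, a_n)`: the maximum of `a_i + a_{i+1}` over `0 ≤ i ≤ n-1`
(`0` if the list has length ≤ 1). -/
def sprL (a : List ℕ) : ℕ :=
  (Finset.range (a.length - 1)).sup (fun i => a.getD i 0 + a.getD (i + 1) 0)

/-- `M(a)`: the set of left indices of maximal pairs. -/
def Mset (a : List ℕ) : Finset ℕ :=
  (Finset.range (a.length - 1)).filter (fun i => a.getD i 0 + a.getD (i + 1) 0 = sprL a)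

/-- The connected component (maximal interval of consecutive integers) of `i` inside `S`. -/
def compF (S : Finset ℕ) (i : ℕ) : Finset ℕ :=
  S.filter (fun j => Finset.Icc (min i j) (max i j) ⊆ S)

/-- The left endpoints of the maximal intervals of consecutive integers of `S`. -/
def leftEnds (S : Finset ℕ) : Finset ℕ :=
  S.filter (fun i => i = 0 ∨ (i - 1) ∉ S)

/-- O'Hara's degree: the sum over the maximal intervals `D` of `M(a)` of `⌈|D|/2⌉`. -/
def ecdL (a : List ℕ) : ℕ :=
  ∑ i ∈ leftEnds (Mset a), ((compF (Mset a) i).card + 1) / 2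

/-- The set of active indices `Act(a) = M(a) ∪ (1 + M(a))`. -/
def ActF (a : List ℕ) : Finset ℕ :=
  Mset a ∪ (Mset a).image (· + 1)

/-- An index `j` survives in `ω(a)` iff it is not active, or it is the left endpoint `c` of a
maximal interval `D = [c, c+d]` of `M(a)` with `d` odd (i.e. `|D|` even). -/
def survivesB (a : List ℕ) (j : ℕ) : Bool :=
  decide (j ∉ ActF a ∨ (j ∈ leftEnds (Mset a) ∧ Even (compF (Mset a) j).card))

/-- `ω(a)`: the result of removing from `a` the largest possible number of maximal pairs. -/
def omegaL (a : List ℕ) : List ℕ :=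
  ((List.range a.length).filter (fun j => survivesB a j)).map (fun j => a.getD j 0)

/-- Fuel-driven recursion computing the signature (the fuel `a.length` in `sigmaL`
always suffices, since `ω` shortens a list of length ≥ 3 by at least 2). -/
def sigmaAux : ℕ → List ℕ → List ℕ
  | _, [] => []
  | 0, a => [a.sum]
  | fuel + 1, a =>
    if a.length ≤ 2 then [a.sum]
    else List.replicate (ecdL a - 1) 0 ++ [sprL a - sprL (omegaL a)] ++ sigmaAux fuel (omegaL a)

/-- The signature `σ(a)`. -/
def sigmaL (a : List ℕ) : List ℕ := sigmaAux a.length a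

/-- `m = Σ_{j=0}^k (j+1)·d_j` determined by a signature `(d_0, …, d_k)`. -/
def mOf (ds : List ℕ) : ℕ := ∑ j ∈ Finset.range ds.length, (j + 1) * ds.getD j 0

/-- `Q_n(d_0, …, d_k)`: the set of elements of `A_n(m)` of signature `(d_0, …, d_k)`. -/
def Qset (n : ℕ) (ds : List ℕ) : Set (List ℕ) :=
  {a | a.length = n + 1 ∧ a.sum = mOf ds ∧ sigmaL a = ds}

/-- The rank `rk(a) = Σ i·a_i`. -/
def rkL (a : List ℕ) : ℕ := ∑ i ∈ Finset.range a.length, i * a.getD i 0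

/-- `b` covers `a` in `A_n(m)`: `b` is obtained from `a` by replacing some consecutive pair
`(a_i, a_{i+1})` by `(a_i - 1, a_{i+1} + 1)`. -/
def coversL (b a : List ℕ) : Prop :=
  ∃ i, i + 1 < a.length ∧ 0 < a.getD i 0 ∧
    b = (a.set i (a.getD i 0 - 1)).set (i + 1) (a.getD (i + 1) 0 + 1)

/-- Normalization phase of the raising algorithm: starting at index `i ∈ M(a)`, repeatedly
replace `i` by `i - 1` as long as `i ≥ 1` and `a_{i+1} = a_{i-1}`. -/
def rnormIdx (a : List ℕ) : ℕ → ℕ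
  | 0 => 0
  | i + 1 => if a.getD (i + 2) 0 = a.getD i 0 then rnormIdx a i else i + 1

/-- One move of the raising algorithm from `(a, i)` with `i ∈ M(a)`: after normalizing the
index, either halt (`none`, at an initial element) or perform one step. -/
def raiseMove (a : List ℕ) (i : ℕ) : Option (List ℕ × ℕ) :=
  let j := rnormIdx a i
  if a.getD (j + 1) 0 = 0 then none
  else some ((a.set j (a.getD j 0 + 1)).set (j + 1) (a.getD (j + 1) 0 - 1), j)

/-- The list of elements produced by iterating the raising algorithm (including the start). -/
def raiseList : ℕ → List ℕ → ℕ → List (List ℕ)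
  | 0, a, _ => [a]
  | fuel + 1, a, i =>
    match raiseMove a i with
    | none => [a]
    | some (a', j) => a :: raiseList fuel a' j

/-- Normalization phase of the lowering algorithm: starting at index `i ∈ M(a)`, repeatedly
replace `i` by `i + 1` as long as `i ≤ n - 2` and `a_i = a_{i+2}` (fuel-driven). -/
def lnormIdx (a : List ℕ) : ℕ → ℕ → ℕ
  | 0, i => i
  | fuel + 1, i =>
    if i + 2 < a.length ∧ a.getD i 0 = a.getD (i + 2) 0 then lnormIdx a fuel (i + 1) else i

/-- One move of the lowering algorithm from `(a, i)` with `i ∈ M(a)`: after normalizing the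
index, either halt (`none`, at a terminal element) or perform one step. -/
def lowerMove (a : List ℕ) (i : ℕ) : Option (List ℕ × ℕ) :=
  let j := lnormIdx a a.length i
  if a.getD j 0 = 0 then none
  else some ((a.set j (a.getD j 0 - 1)).set (j + 1) (a.getD (j + 1) 0 + 1), j)

/-- The list of elements produced by iterating the lowering algorithm (including the start). -/
def lowerList : ℕ → List ℕ → ℕ → List (List ℕ)
  | 0, a, _ => [a]
  | fuel + 1, a, i =>
    match lowerMove a i with
    | none => [a]
    | some (a', j) => a :: lowerList fuel a' j

/-- The colors of the successive covering relations produced by the lowering algorithm: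
a lowering step at index `j` replaces `(a_j, a_{j+1})` by `(a_j - 1, a_{j+1} + 1)` and has
color `j + 1`. -/
def lowerColors : ℕ → List ℕ → ℕ → List ℕ
  | 0, _, _ => []
  | fuel + 1, a, i =>
    match lowerMove a i with
    | none => []
    | some (a', j) => (j + 1) :: lowerColors fuel a' j

/-- The transversal chain `T_i(a)`: the elements obtained from `a` by the raising algorithm
together with those obtained by the lowering algorithm, both started at index `i ∈ M(a)`.
(The fuels `rk(a)` and `a.length * a.sum` are always sufficient, since each raising move
decreases the rank by 1 and each lowering move increases it by 1, within `[0, n·m]`.) -/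
def Tset (a : List ℕ) (i : ℕ) : Set (List ℕ) :=
  {x | x ∈ raiseList (rkL a) a i ∨ x ∈ lowerList (a.length * a.sum) a i}

end OHara

/-!
Passing from `𝔞` to `ω(𝔞)` amounts to deleting `ecd(𝔞)` adjacent pairs of sum `spr(𝔞)`, one after
the other. Since no adjacent pair has a larger sum, deleting one pair shortens each nonempty prefix
of even length by two entries at the cost of at most `spr(𝔞)` in the sum. Recursively, the prefix
sums of `𝔞` are bounded by sums of tail sums of the signature, and these are the prefix sums of `𝔥`.
As both tuples have the same total `m`, and `rk` is `n m` minus the sum of the proper prefix sums,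
`𝔥` has smaller rank than every other `𝔞`.

For `𝔥` itself, the condition `m = Σ (j+1) d_j` matters when `n` is even and positive: the last
entry `d_k` of a signature is then the single entry left over at the end, and comparing the total
with the bound above forces `d_k = 0`. Hence `spr(𝔥) = Σ d_j`, the set `M(𝔥)` is an initial
interval, and `ω(𝔥)` is a tail of `𝔥`, which is the tuple attached to a tail of `(d_0, …, d_k)`.
-/

namespace OHara

/-! ### Prefix sums and rank -/

theorem sum_take_succ_getD (a : List ℕ) (j : ℕ) :
    (a.take (j + 1)).sum = (a.take j).sum + a.getD j 0 := by
  rcases lt_or_ge j a.length with hj | hj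
  · rw [List.sum_take_succ _ _ hj, List.getD_eq_getElem _ _ hj]
  · rw [List.take_of_length_le hj, List.take_of_length_le (hj.trans j.le_succ),
      List.getD_eq_default _ _ hj, add_zero]

theorem sum_take_eq_sum_range (a : List ℕ) (j : ℕ) :
    (a.take j).sum = ∑ i ∈ Finset.range j, a.getD i 0 := by
  induction j with
  | zero => rfl
  | succ j ih => rw [sum_take_succ_getD, Finset.sum_range_succ, ih]

theorem sum_drop_antitone (a : List ℕ) : Antitone fun i => (a.drop i).sum :=
  fun _ _ hij => (List.drop_sublist_drop_left a hij).sum_le_sum fun _ _ => Nat.zero_le _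

theorem sum_drop_le_sum (a : List ℕ) (i : ℕ) : (a.drop i).sum ≤ a.sum :=
  sum_drop_antitone a i.zero_le

theorem sum_drop_eq_sum_of_le {a : List ℕ} {i j : ℕ} (hj : (a.drop j).sum = a.sum)
    (hij : i ≤ j) : (a.drop i).sum = a.sum :=
  (sum_drop_le_sum a i).antisymm (hj ▸ sum_drop_antitone a hij)

theorem drop_eq_getD_cons {a : List ℕ} {c : ℕ} (hc : c < a.length) :
    a.drop c = a.getD c 0 :: a.drop (c + 1) := by
  rw [List.drop_eq_getElem_cons hc, List.getD_eq_getElem _ _ hc]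

theorem getD_drop (a : List ℕ) (i j : ℕ) : (a.drop i).getD j 0 = a.getD (i + j) 0 := by
  simp only [List.getD_eq_getElem?_getD, List.getElem?_drop]

theorem eq_of_sum_take_eq {a b : List ℕ} (hlen : a.length = b.length)
    (hsum : ∀ j ≤ a.length, (a.take j).sum = (b.take j).sum) : a = b := by
  refine List.ext_getElem hlen fun i ha hb => ?_
  have hi := hsum i ha.le
  have hi' := hsum (i + 1) ha
  rw [List.sum_take_succ _ _ ha, List.sum_take_succ _ _ hb] at hi'
  omega

theorem rkL_cons (x : ℕ) (a : List ℕ) : rkL (x :: a) = rkL a + a.sum := by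
  have hsum := sum_take_eq_sum_range a a.length
  rw [List.take_length] at hsum
  simp only [rkL, List.length_cons, Finset.sum_range_succ', List.getD_cons_succ, zero_mul,
    add_zero, add_mul, one_mul, Finset.sum_add_distrib, hsum]

theorem rkL_add_sum_sum_take (a : List ℕ) :
    rkL a + ∑ j ∈ Finset.range (a.length + 1), (a.take j).sum = a.length * a.sum := by
  induction a with
  | nil => rfl
  | cons x a ih =>
    rw [List.length_cons, Finset.sum_range_succ', rkL_cons]
    simp only [List.take_succ_cons, List.sum_cons, Finset.sum_add_distrib, Finset.sum_const,
      Finset.card_range, smul_eq_mul, List.take_zero, List.sum_nil]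
    linear_combination ih

theorem rkL_lt_of_sum_take_le {a b : List ℕ} (hlen : a.length = b.length) (hsum : a.sum = b.sum)
    (hle : ∀ j, (a.take j).sum ≤ (b.take j).sum) (hne : a ≠ b) : rkL b < rkL a := by
  obtain ⟨j, hj, hlt⟩ : ∃ j ≤ a.length, (a.take j).sum < (b.take j).sum := by
    by_contra! hge
    exact hne (eq_of_sum_take_eq hlen fun j hj => (hle j).antisymm (hge j hj))
  have hlt' : ∑ j ∈ Finset.range (a.length + 1), (a.take j).sum <
      ∑ j ∈ Finset.range (a.length + 1), (b.take j).sum :=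
    Finset.sum_lt_sum (fun j _ => hle j) ⟨j, Finset.mem_range_succ_iff.2 hj, hlt⟩
  have ha := rkL_add_sum_sum_take a
  have hb := rkL_add_sum_sum_take b
  rw [← hlen, ← hsum] at hb
  omega

/-! ### Spread and deletion of maximal pairs -/

theorem sprL_le_iff {a : List ℕ} {s : ℕ} : sprL a ≤ s ↔ a.IsChain (· + · ≤ s) := by
  simp only [sprL, Finset.sup_le_iff, Finset.mem_range, List.isChain_iff_getElem]
  refine forall_congr' fun i => ⟨fun h hi => ?_, fun h hi => ?_⟩
  · simpa only [List.getD_eq_getElem _ _ hi, List.getD_eq_getElem _ _ (i.lt_succ_self.trans hi)]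
      using h (by omega)
  · have hlt : i + 1 < a.length := by omega
    simpa only [List.getD_eq_getElem _ _ hlt, List.getD_eq_getElem _ _ (i.lt_succ_self.trans hlt)]
      using h hlt

/-- `PairDeletion s e a b`: the list `b` arises from `a` by deleting, one after the other, `e`
adjacent pairs of sum `s`. The pairs need only be adjacent at the time they are deleted. -/
inductive PairDeletion (s : ℕ) : ℕ → List ℕ → List ℕ → Prop
  | refl (a : List ℕ) : PairDeletion s 0 a a
  | delete {e x y : ℕ} (u : List ℕ) {v b : List ℕ} (hxy : x + y = s)
      (h : PairDeletion s e (u ++ v) b) : PairDeletion s (e + 1) (u ++ x :: y :: v) b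

theorem isChain_append_of_pair {s x y : ℕ} {u v : List ℕ} (hxy : x + y = s)
    (h : (u ++ x :: y :: v).IsChain (· + · ≤ s)) : (u ++ v).IsChain (· + · ≤ s) := by
  obtain ⟨hu, hv, hux⟩ := List.isChain_append.1 h
  refine List.isChain_append.2 ⟨hu, hv.tail.tail, fun p hp q hq => ?_⟩
  have hpx : p + x ≤ s := hux p hp x rfl
  have hyq : y + q ≤ s := (List.isChain_cons.1 hv.tail).1 q hq
  omega

theorem sum_take_pair_le {s x y : ℕ} {v : List ℕ} (hxy : x + y = s) :
    ∀ (u : List ℕ) (t : ℕ), (u ++ x :: y :: v).IsChain (· + · ≤ s) →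
      ((u ++ x :: y :: v).take (2 * (t + 1))).sum ≤ s + ((u ++ v).take (2 * t)).sum
  | [], t, _ => by
    simp only [mul_add, List.nil_append, mul_one, List.take_succ_cons, List.sum_cons]
    omega
  | [z], 0, h => by simpa using (List.isChain_cons_cons.1 h).1
  | [z], t + 1, _ => by
    simp only [mul_add, List.cons_append, List.nil_append, mul_one, List.take_succ_cons,
      List.sum_cons]
    omega
  | z :: w :: u, 0, h => by simpa using (List.isChain_cons_cons.1 h).1
  | z :: w :: u, t + 1, h => by
    have ih := sum_take_pair_le hxy u t h.tail.tail
    simp only [mul_add, List.cons_append, mul_one, List.take_succ_cons, List.sum_cons] at ih ⊢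
    omega

namespace PairDeletion

variable {s e : ℕ} {a b : List ℕ}

theorem cons (z : ℕ) (h : PairDeletion s e a b) : PairDeletion s e (z :: a) (z :: b) := by
  induction h with
  | refl a => exact refl _
  | delete u hxy _ ih => exact delete (z :: u) hxy ih

theorem length_eq (h : PairDeletion s e a b) : a.length = 2 * e + b.length := by
  induction h with
  | refl a => rw [mul_zero, zero_add]
  | delete u hxy _ ih =>
    simp only [List.length_append, List.length_cons] at ih ⊢
    omega

theorem isChain (h : PairDeletion s e a b) (ha : a.IsChain (· + · ≤ s)) :
    b.IsChain (· + · ≤ s) := by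
  induction h with
  | refl a => exact ha
  | delete u hxy _ ih => exact ih (isChain_append_of_pair hxy ha)

theorem sum_take_le (h : PairDeletion s e a b) (ha : a.IsChain (· + · ≤ s)) (t : ℕ) :
    (a.take (2 * t)).sum ≤ min t e * s + (b.take (2 * (t - e))).sum := by
  induction h generalizing t with
  | refl a => simp
  | @delete e x y u v b hxy _ ih =>
    cases t with
    | zero => simp
    | succ t =>
      calc ((u ++ x :: y :: v).take (2 * (t + 1))).sum
          ≤ s + ((u ++ v).take (2 * t)).sum := sum_take_pair_le hxy u t ha
        _ ≤ s + (min t e * s + (b.take (2 * (t - e))).sum) :=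
          Nat.add_le_add_left (ih (isChain_append_of_pair hxy ha) t) s
        _ = min (t + 1) (e + 1) * s + (b.take (2 * (t + 1 - (e + 1)))).sum := by
          rw [Nat.add_sub_add_right, Nat.add_min_add_right]
          ring

theorem drop_of_consecutive {c m : ℕ}
    (hpairs : ∀ i < m, c + 2 * i + 1 < a.length ∧
      a.getD (c + 2 * i) 0 + a.getD (c + 2 * i + 1) 0 = s)
    (h : PairDeletion s e (a.drop (c + 2 * m)) b) : PairDeletion s (e + m) (a.drop c) b := by
  induction m generalizing c with
  | zero => exact h
  | succ m ih =>
    obtain ⟨hlt, hsum⟩ := hpairs 0 m.succ_pos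
    rw [drop_eq_getD_cons (by omega : c < a.length),
      drop_eq_getD_cons (by omega : c + 1 < a.length)]
    refine delete [] hsum (ih (c := c + 2) (fun i hi => ?_) ?_)
    · rw [show c + 2 + 2 * i = c + 2 * (i + 1) by ring]
      exact hpairs (i + 1) (by omega)
    · rwa [show c + 2 + 2 * m = c + 2 * (m + 1) by ring]

end PairDeletion

/-! ### Maximal intervals and `ω` -/

/-- `{c, …, c + l - 1}` is one of the maximal intervals of consecutive integers of `S`, the
intervals `D` of the definition of the degree when `S = M(a)`. -/
structure IsMaximalInterval (S : Finset ℕ) (c l : ℕ) : Prop where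
  pos : 0 < l
  mem : ∀ i, c ≤ i → i < c + l → i ∈ S
  right_notMem : c + l ∉ S
  left_notMem : c = 0 ∨ c - 1 ∉ S

theorem exists_isMaximalInterval {S : Finset ℕ} {c : ℕ} (hc : c ∈ S)
    (hleft : c = 0 ∨ c - 1 ∉ S) : ∃ l, IsMaximalInterval S c l := by
  have hex : ∃ l, c + l ∉ S := by
    obtain ⟨N, hN⟩ := S.exists_nat_subset_range
    exact ⟨N, fun h => by have := Finset.mem_range.1 (hN h); omega⟩
  classical
  refine ⟨Nat.find hex, Nat.pos_of_ne_zero fun h0 => ?_, fun i hci hi => ?_, Nat.find_spec hex,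
    hleft⟩
  · exact (Nat.find_eq_zero hex).1 h0 hc
  · obtain ⟨j, rfl⟩ := Nat.exists_eq_add_of_le hci
    exact not_not.1 (Nat.find_min hex (by omega))

theorem mem_Mset {a : List ℕ} {i : ℕ} :
    i ∈ Mset a ↔ i + 1 < a.length ∧ a.getD i 0 + a.getD (i + 1) 0 = sprL a := by
  rw [Mset, Finset.mem_filter, Finset.mem_range, Nat.lt_sub_iff_add_lt]

theorem Mset_nonempty {a : List ℕ} (ha : 2 ≤ a.length) : (Mset a).Nonempty := by
  obtain ⟨i, hi, hmax⟩ := Finset.exists_mem_eq_sup (Finset.range (a.length - 1))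
    ⟨0, Finset.mem_range.2 (by omega)⟩ fun i => a.getD i 0 + a.getD (i + 1) 0
  exact ⟨i, Finset.mem_filter.2 ⟨hi, hmax.symm⟩⟩

theorem mem_ActF {a : List ℕ} {j : ℕ} :
    j ∈ ActF a ↔ j ∈ Mset a ∨ j ≠ 0 ∧ j - 1 ∈ Mset a := by
  cases j <;> simp [ActF]

theorem survivesB_iff {a : List ℕ} {j : ℕ} : survivesB a j = true ↔
    j ∉ ActF a ∨ j ∈ leftEnds (Mset a) ∧ Even (compF (Mset a) j).card :=
  decide_eq_true_iff

theorem survivesB_of_notMem {a : List ℕ} {c : ℕ} (hc : c ∉ Mset a)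
    (hleft : c = 0 ∨ c - 1 ∉ Mset a) : survivesB a c = true := by
  rw [survivesB_iff, mem_ActF]
  tauto

namespace IsMaximalInterval

variable {S : Finset ℕ} {c l : ℕ}

theorem left_mem (h : IsMaximalInterval S c l) : c ∈ S :=
  h.mem c le_rfl (Nat.lt_add_of_pos_right h.pos)

theorem left_mem_leftEnds (h : IsMaximalInterval S c l) : c ∈ leftEnds S :=
  Finset.mem_filter.2 ⟨h.left_mem, h.left_notMem⟩

theorem notMem_leftEnds (h : IsMaximalInterval S c l) {j : ℕ} (hcj : c < j) (hj : j ≤ c + l) :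
    j ∉ leftEnds S := fun hjl => by
  rcases (Finset.mem_filter.1 hjl).2 with h0 | hpred
  · omega
  · exact hpred (h.mem _ (by omega) (by omega))

theorem compF_eq (h : IsMaximalInterval S c l) : compF S c = Finset.Ico c (c + l) := by
  ext j
  simp only [compF, Finset.mem_filter, Finset.mem_Ico]
  constructor
  · rintro ⟨-, hsub⟩
    constructor
    · by_contra! hjc
      rcases h.left_notMem with h0 | hleft
      · omega
      · exact hleft (hsub (Finset.mem_Icc.2 ⟨by omega, by omega⟩))
    · by_contra! hlj
      exact h.right_notMem (hsub (Finset.mem_Icc.2 ⟨by omega, by omega⟩))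
  · rintro ⟨hcj, hjl⟩
    refine ⟨h.mem j hcj hjl, fun i hi => ?_⟩
    rw [Finset.mem_Icc] at hi
    exact h.mem i (by omega) (by omega)

theorem card_compF (h : IsMaximalInterval S c l) : (compF S c).card = l := by
  rw [h.compF_eq, Nat.card_Ico, Nat.add_sub_cancel_left]

theorem leftEnds_filter (h : IsMaximalInterval S c l) :
    {i ∈ leftEnds S | c ≤ i} = insert c {i ∈ leftEnds S | c + l + 1 ≤ i} := by
  ext i
  simp only [Finset.mem_filter, Finset.mem_insert]
  constructor
  · rintro ⟨hi, hci⟩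
    by_contra! hcon
    exact h.notMem_leftEnds (by omega) (by have := hcon.2 hi; omega) hi
  · rintro (rfl | ⟨hi, hci⟩)
    · exact ⟨h.left_mem_leftEnds, le_rfl⟩
    · exact ⟨hi, by omega⟩

variable {a : List ℕ}

theorem add_lt_length (h : IsMaximalInterval (Mset a) c l) : c + l < a.length := by
  have hl := h.pos
  have := (mem_Mset.1 (h.mem (c + l - 1) (by omega) (by omega))).1
  omega

theorem survivesB_left_iff (h : IsMaximalInterval (Mset a) c l) :
    survivesB a c = true ↔ Even l := by
  rw [survivesB_iff, mem_ActF, h.card_compF]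
  have := h.left_mem
  have := h.left_mem_leftEnds
  tauto

theorem not_survivesB (h : IsMaximalInterval (Mset a) c l) {j : ℕ} (hcj : c < j)
    (hj : j ≤ c + l) : ¬ survivesB a j = true := by
  rw [survivesB_iff, mem_ActF]
  have := h.notMem_leftEnds hcj hj
  have : j - 1 ∈ Mset a := h.mem _ (by omega) (by omega)
  have : j ≠ 0 := by omega
  tauto

end IsMaximalInterval

/-- The part of `ω(a)` made up of the surviving entries with index at least `c`. -/
def omegaFrom (a : List ℕ) (c : ℕ) : List ℕ :=
  ((List.range' c (a.length - c)).filter (survivesB a)).map (a.getD · 0)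

/-- The contribution to the degree of `a` of the maximal intervals of `M(a)` whose left endpoint
is at least `c`. -/
def ecdFrom (a : List ℕ) (c : ℕ) : ℕ :=
  ∑ i ∈ leftEnds (Mset a) with c ≤ i, ((compF (Mset a) i).card + 1) / 2

section omegaFrom

variable {a : List ℕ} {c : ℕ}

theorem omegaFrom_zero (a : List ℕ) : omegaFrom a 0 = omegaL a := by
  rw [omegaFrom, omegaL, List.range_eq_range', Nat.sub_zero]

theorem ecdFrom_zero (a : List ℕ) : ecdFrom a 0 = ecdL a := by
  simp only [ecdFrom, ecdL, Nat.zero_le, Finset.filter_true]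

theorem omegaFrom_eq_nil (hc : a.length ≤ c) : omegaFrom a c = [] := by
  rw [omegaFrom, Nat.sub_eq_zero_of_le hc]
  rfl

theorem omegaFrom_eq (hc : c < a.length) : omegaFrom a c =
    (if survivesB a c then [a.getD c 0] else []) ++ omegaFrom a (c + 1) := by
  rw [omegaFrom, show a.length - c = a.length - (c + 1) + 1 by omega, List.range'_succ,
    List.filter_cons]
  split_ifs <;> rfl

theorem omegaFrom_eq_of_not_survivesB {l : ℕ} (hl : c + l ≤ a.length)
    (hsurv : ∀ j, c ≤ j → j < c + l → ¬ survivesB a j = true) :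
    omegaFrom a c = omegaFrom a (c + l) := by
  induction l with
  | zero => rfl
  | succ l ih =>
    rw [ih (by omega) fun j hcj hj => hsurv j hcj (by omega), omegaFrom_eq (by omega),
      if_neg (hsurv _ (by omega) (by omega)), List.nil_append, add_assoc]

theorem omegaFrom_of_notMem (hlt : c < a.length) (hc : c ∉ Mset a)
    (hleft : c = 0 ∨ c - 1 ∉ Mset a) : omegaFrom a c = a.getD c 0 :: omegaFrom a (c + 1) := by
  rw [omegaFrom_eq hlt, if_pos (survivesB_of_notMem hc hleft), List.singleton_append]

theorem ecdFrom_of_notMem (hc : c ∉ Mset a) : ecdFrom a c = ecdFrom a (c + 1) := by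
  refine Finset.sum_congr (Finset.filter_congr fun i hi => ?_) fun _ _ => rfl
  have hic : i ≠ c := fun h => hc (h ▸ (Finset.mem_filter.1 hi).1)
  omega

theorem ecdFrom_eq_zero (hc : ∀ i ∈ Mset a, i < c) : ecdFrom a c = 0 := by
  rw [ecdFrom, Finset.filter_false_of_mem, Finset.sum_empty]
  exact fun i hi => (hc i (Finset.mem_filter.1 hi).1).not_ge

theorem omegaFrom_eq_drop {a : List ℕ} {c : ℕ} (hc : ∀ i ∈ Mset a, i + 1 < c) :
    omegaFrom a c = a.drop c := by
  rcases le_or_gt a.length c with hlen | hlen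
  · rw [omegaFrom_eq_nil hlen, List.drop_eq_nil_of_le hlen]
  · rw [omegaFrom_of_notMem hlen (fun h => by have := hc _ h; omega)
      (Or.inr fun h => by have := hc _ h; omega), drop_eq_getD_cons hlen,
      omegaFrom_eq_drop fun i hi => (hc i hi).trans c.lt_succ_self]
termination_by a.length - c

variable {l : ℕ}

theorem IsMaximalInterval.omegaFrom_eq (h : IsMaximalInterval (Mset a) c l) : omegaFrom a c =
    (if Even l then [a.getD c 0] else []) ++ omegaFrom a (c + l + 1) := by
  have hlen := h.add_lt_length
  have hskip : omegaFrom a (c + 1) = omegaFrom a (c + 1 + l) :=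
    omegaFrom_eq_of_not_survivesB (by omega) fun j hcj hj => h.not_survivesB hcj (by omega)
  rw [OHara.omegaFrom_eq (by omega), hskip, Nat.add_right_comm]
  simp only [h.survivesB_left_iff]

theorem IsMaximalInterval.ecdFrom_eq (h : IsMaximalInterval (Mset a) c l) :
    ecdFrom a c = (l + 1) / 2 + ecdFrom a (c + l + 1) := by
  have hnotMem : c ∉ {i ∈ leftEnds (Mset a) | c + l + 1 ≤ i} := fun hmem => by
    have := (Finset.mem_filter.1 hmem).2
    omega
  rw [ecdFrom, h.leftEnds_filter, Finset.sum_insert hnotMem, h.card_compF]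
  rfl

theorem IsMaximalInterval.omegaL_eq (h : IsMaximalInterval (Mset a) 0 l)
    (hl : ∀ i ∈ Mset a, i < l) :
    omegaL a = (if Even l then [a.getD 0 0] else []) ++ a.drop (l + 1) := by
  rw [← omegaFrom_zero, h.omegaFrom_eq, zero_add,
    omegaFrom_eq_drop fun i hi => Nat.succ_lt_succ (hl i hi)]

theorem IsMaximalInterval.ecdL_eq (h : IsMaximalInterval (Mset a) 0 l)
    (hl : ∀ i ∈ Mset a, i < l) : ecdL a = (l + 1) / 2 := by
  rw [← ecdFrom_zero, h.ecdFrom_eq, zero_add,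
    ecdFrom_eq_zero fun i hi => (hl i hi).trans l.lt_succ_self, add_zero]

theorem IsMaximalInterval.pairDeletion (h : IsMaximalInterval (Mset a) c l) {e : ℕ} {b : List ℕ}
    (hb : PairDeletion (sprL a) e (a.drop (c + l + 1)) b) :
    PairDeletion (sprL a) ((l + 1) / 2 + e) (a.drop c)
      ((if Even l then [a.getD c 0] else []) ++ b) := by
  have hpair : ∀ i, c ≤ i → i < c + l →
      i + 1 < a.length ∧ a.getD i 0 + a.getD (i + 1) 0 = sprL a :=
    fun i hci hi => mem_Mset.1 (h.mem i hci hi)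
  rw [add_comm]
  rcases Nat.even_or_odd' l with ⟨m, rfl | rfl⟩
  · rw [if_pos (even_two_mul m), show (2 * m + 1) / 2 = m by omega,
      drop_eq_getD_cons (by have := h.add_lt_length; omega)]
    refine .cons _ (.drop_of_consecutive (fun i hi => hpair _ (by omega) (by omega)) ?_)
    rwa [Nat.add_right_comm]
  · rw [if_neg (Nat.not_even_two_mul_add_one m), show (2 * m + 1 + 1) / 2 = m + 1 by omega]
    exact .drop_of_consecutive (fun i hi => hpair _ (by omega) (by omega)) hb

theorem pairDeletion_omegaFrom {a : List ℕ} {c : ℕ} (hlen : c ≤ a.length)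
    (hleft : c = 0 ∨ c - 1 ∉ Mset a) :
    PairDeletion (sprL a) (ecdFrom a c) (a.drop c) (omegaFrom a c) := by
  rcases hlen.eq_or_lt with hc | hc
  · rw [ecdFrom_eq_zero fun i hi => by have := (mem_Mset.1 hi).1; omega,
      List.drop_eq_nil_of_le hc.ge, omegaFrom_eq_nil hc.ge]
    exact .refl _
  by_cases hcM : c ∈ Mset a
  · obtain ⟨l, h⟩ := exists_isMaximalInterval hcM hleft
    rw [h.omegaFrom_eq, h.ecdFrom_eq]
    exact h.pairDeletion (pairDeletion_omegaFrom h.add_lt_length (Or.inr h.right_notMem))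
  · rw [omegaFrom_of_notMem hc hcM hleft, ecdFrom_of_notMem hcM, drop_eq_getD_cons hc]
    exact (pairDeletion_omegaFrom hc (Or.inr hcM)).cons _
termination_by a.length - c

end omegaFrom

theorem pairDeletion_omegaL (a : List ℕ) : PairDeletion (sprL a) (ecdL a) a (omegaL a) := by
  rw [← omegaFrom_zero, ← ecdFrom_zero]
  exact pairDeletion_omegaFrom a.length.zero_le (Or.inl rfl)

theorem sprL_omegaL_le (a : List ℕ) : sprL (omegaL a) ≤ sprL a :=
  sprL_le_iff.2 ((pairDeletion_omegaL a).isChain (sprL_le_iff.1 le_rfl))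

theorem ecdL_pos {a : List ℕ} (ha : 2 ≤ a.length) : 0 < ecdL a := by
  have hne := Mset_nonempty ha
  have hmin := (Mset a).min'_mem hne
  have hleft : (Mset a).min' hne = 0 ∨ (Mset a).min' hne - 1 ∉ Mset a := by
    by_contra! hcon
    have := (Mset a).min'_le _ hcon.2
    omega
  obtain ⟨l, h⟩ := exists_isMaximalInterval hmin hleft
  refine Finset.sum_pos' (fun _ _ => Nat.zero_le _) ⟨_, h.left_mem_leftEnds, ?_⟩
  rw [h.card_compF]
  have := h.pos
  omega

theorem length_eq_add_length_omegaL (a : List ℕ) : a.length = 2 * ecdL a + (omegaL a).length :=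
  (pairDeletion_omegaL a).length_eq

theorem length_omegaL_lt {a : List ℕ} (ha : 2 ≤ a.length) : (omegaL a).length < a.length := by
  have := length_eq_add_length_omegaL a
  have := ecdL_pos ha
  omega

/-! ### The signature -/

theorem sigmaAux_succ (f : ℕ) {a : List ℕ} (ha : 3 ≤ a.length) : sigmaAux (f + 1) a =
    List.replicate (ecdL a - 1) 0 ++ (sprL a - sprL (omegaL a)) :: sigmaAux f (omegaL a) := by
  have hne : a ≠ [] := List.length_pos_iff.1 (by omega)
  rw [sigmaAux.eq_3 _ _ hne, if_neg (by omega), List.append_assoc, List.singleton_append]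

theorem sigmaAux_of_length_le_two (f : ℕ) {a : List ℕ} (hne : a ≠ []) (ha : a.length ≤ 2) :
    sigmaAux f a = [a.sum] := by
  cases f with
  | zero => exact sigmaAux.eq_2 a hne
  | succ f => rw [sigmaAux.eq_3 _ _ hne, if_pos ha]

theorem sigmaAux_eq_sigmaAux {f g : ℕ} {a : List ℕ} (hf : a.length ≤ f) (hg : a.length ≤ g) :
    sigmaAux f a = sigmaAux g a := by
  induction f generalizing a g with
  | zero =>
    obtain rfl := List.length_eq_zero_iff.1 (Nat.le_zero.1 hf)
    rw [sigmaAux, sigmaAux]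
  | succ f ih =>
    rcases eq_or_ne a [] with rfl | hne
    · rw [sigmaAux, sigmaAux]
    rcases le_or_gt a.length 2 with ha | ha
    · rw [sigmaAux_of_length_le_two _ hne ha, sigmaAux_of_length_le_two _ hne ha]
    · have hlt := length_omegaL_lt ha.le
      obtain ⟨g, rfl⟩ := Nat.exists_eq_succ_of_ne_zero (by omega : g ≠ 0)
      rw [sigmaAux_succ f ha, sigmaAux_succ g ha, ih (g := g) (by omega) (by omega)]

theorem sigmaL_singleton (x : ℕ) : sigmaL [x] = [x] := rfl

theorem sigmaL_pair (x y : ℕ) : sigmaL [x, y] = [x + y] := rfl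

theorem sigmaL_eq {a : List ℕ} (ha : 3 ≤ a.length) : sigmaL a =
    List.replicate (ecdL a - 1) 0 ++ (sprL a - sprL (omegaL a)) :: sigmaL (omegaL a) := by
  obtain ⟨f, hf⟩ := Nat.exists_eq_succ_of_ne_zero (by omega : a.length ≠ 0)
  have hlt := length_omegaL_lt (by omega : 2 ≤ a.length)
  rw [sigmaL, hf, sigmaAux_succ f ha, sigmaAux_eq_sigmaAux (by omega) le_rfl, sigmaL]

theorem omegaL_induction {motive : List ℕ → Prop} (nil : motive [])
    (singleton : ∀ x, motive [x]) (pair : ∀ x y, motive [x, y])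
    (omega : ∀ a, 3 ≤ a.length → motive (omegaL a) → motive a) : ∀ a, motive a
  | [] => nil
  | [x] => singleton x
  | [x, y] => pair x y
  | x :: y :: z :: l =>
    omega _ (by simp) (omegaL_induction nil singleton pair omega (omegaL (x :: y :: z :: l)))
termination_by a => a.length
decreasing_by exact length_omegaL_lt (by simp)

theorem sprL_singleton (x : ℕ) : sprL [x] = 0 := rfl

theorem sprL_pair (x y : ℕ) : sprL [x, y] = x + y := by
  simp [sprL]

theorem getD_replicate_append_cons (j x : ℕ) (l : List ℕ) (i : ℕ) :
    (List.replicate j 0 ++ x :: l).getD (j + 1 + i) 0 = l.getD i 0 := by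
  rw [List.getD_append_right _ _ _ _ (by rw [List.length_replicate]; omega),
    List.length_replicate, show j + 1 + i - j = i + 1 by omega, List.getD_cons_succ]

-- For `a` of odd length, `(σ(a)).getD (a.length / 2) 0` is the last entry of the signature, i.e.
-- the single entry that remains after all deletions; for `a` of even length it is a junk `0`.
theorem sum_sigmaL (a : List ℕ) :
    (sigmaL a).sum = sprL a + (sigmaL a).getD (a.length / 2) 0 := by
  induction a using omegaL_induction with
  | nil => rfl
  | singleton x => rw [sigmaL_singleton, sprL_singleton]; simp
  | pair x y => rw [sigmaL_pair, sprL_pair]; simp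
  | omega a ha ih =>
    have hlen := length_eq_add_length_omegaL a
    have hpos := ecdL_pos (by omega : 2 ≤ a.length)
    have hle := sprL_omegaL_le a
    rw [sigmaL_eq ha, show a.length / 2 = ecdL a - 1 + 1 + (omegaL a).length / 2 by omega,
      getD_replicate_append_cons, List.sum_append, List.sum_replicate, List.sum_cons, ih,
      smul_zero]
    omega

/-- The sum of the first `t` tail sums `d_i + d_{i+1} + ⋯ + d_k` of `(d_0, …, d_k)`, that is,
`h_0 + h_2 + ⋯ + h_{2t-2}`. -/
def sumTails (ds : List ℕ) (t : ℕ) : ℕ := ∑ i ∈ Finset.range t, (ds.drop i).sum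

theorem sumTails_succ (ds : List ℕ) (t : ℕ) :
    sumTails ds (t + 1) = sumTails ds t + (ds.drop t).sum :=
  Finset.sum_range_succ _ _

theorem sumTails_cons (d : ℕ) (ds : List ℕ) (t : ℕ) :
    sumTails (d :: ds) (t + 1) = (d :: ds).sum + sumTails ds t := by
  rw [sumTails, Finset.sum_range_succ', add_comm]
  rfl

theorem mOf_cons (d : ℕ) (ds : List ℕ) : mOf (d :: ds) = (d :: ds).sum + mOf ds := by
  have hsum := sum_take_eq_sum_range ds ds.length
  rw [List.take_length] at hsum
  simp only [mOf, List.length_cons, Finset.sum_range_succ', List.getD_cons_succ,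
    List.getD_cons_zero, add_mul, one_mul, Finset.sum_add_distrib, ← hsum, List.sum_cons]
  ring

theorem sumTails_eq_mOf {ds : List ℕ} {t : ℕ} (ht : ds.length ≤ t) : sumTails ds t = mOf ds := by
  induction ds generalizing t with
  | nil => simp [sumTails, mOf]
  | cons d ds ih =>
    obtain ⟨t, rfl⟩ := Nat.exists_eq_succ_of_ne_zero (Nat.ne_zero_of_lt ht)
    rw [sumTails_cons, mOf_cons, ih (Nat.succ_le_succ_iff.1 ht)]

theorem sumTails_replicate_append_cons (j x : ℕ) (l : List ℕ) (t : ℕ) :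
    sumTails (List.replicate j 0 ++ x :: l) t =
      min t (j + 1) * (x + l.sum) + sumTails l (t - (j + 1)) := by
  induction j generalizing t with
  | zero =>
    cases t with
    | zero => simp [sumTails]
    | succ t => simp [sumTails_cons]
  | succ j ih =>
    cases t with
    | zero => simp [sumTails]
    | succ t =>
      rw [List.replicate_succ, List.cons_append, sumTails_cons, ih, Nat.add_sub_add_right,
        Nat.add_min_add_right]
      simp only [List.sum_cons, List.sum_append, List.sum_replicate, smul_zero, zero_add]
      ring

theorem sum_take_add_le_sumTails_sigmaL (a : List ℕ) (t : ℕ) :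
    (a.take (2 * t)).sum + min t (a.length / 2) * (sigmaL a).getD (a.length / 2) 0 ≤
      sumTails (sigmaL a) t := by
  induction a using omegaL_induction generalizing t with
  | nil => simp
  | singleton x => cases t <;> simp [sigmaL_singleton, sumTails_cons, mul_add]
  | pair x y => cases t <;> simp [sigmaL_pair, sumTails_cons, mul_add]
  | omega a ha ih =>
    have hlen := length_eq_add_length_omegaL a
    have hpos := ecdL_pos (by omega : 2 ≤ a.length)
    have hle := sprL_omegaL_le a
    have hdel := (pairDeletion_omegaL a).sum_take_le (sprL_le_iff.1 le_rfl) t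
    have hsum := sum_sigmaL (omegaL a)
    have hhalf : a.length / 2 = ecdL a - 1 + 1 + (omegaL a).length / 2 := by omega
    rw [sigmaL_eq ha, hhalf, getD_replicate_append_cons, sumTails_replicate_append_cons,
      Nat.sub_add_cancel hpos, hsum]
    set x := (sigmaL (omegaL a)).getD ((omegaL a).length / 2) 0
    calc (a.take (2 * t)).sum + min t (ecdL a + (omegaL a).length / 2) * x
        ≤ min t (ecdL a) * sprL a + ((omegaL a).take (2 * (t - ecdL a))).sum +
            (min t (ecdL a) + min (t - ecdL a) ((omegaL a).length / 2)) * x := by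
          gcongr
          omega
      _ = min t (ecdL a) * (sprL a + x) + (((omegaL a).take (2 * (t - ecdL a))).sum +
            min (t - ecdL a) ((omegaL a).length / 2) * x) := by ring
      _ ≤ min t (ecdL a) * (sprL a + x) + sumTails (sigmaL (omegaL a)) (t - ecdL a) := by
          gcongr
          exact ih _
      _ = min t (ecdL a) * (sprL a - sprL (omegaL a) + (sprL (omegaL a) + x)) +
            sumTails (sigmaL (omegaL a)) (t - ecdL a) := by
          rw [← add_assoc, Nat.sub_add_cancel hle]

theorem sum_take_le_sumTails_sigmaL (a : List ℕ) (j : ℕ) :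
    (a.take j).sum ≤ sumTails (sigmaL a) ((j + 1) / 2) :=
  ((List.take_sublist_take_left (by omega)).sum_le_sum fun _ _ => Nat.zero_le _).trans
    (le_of_add_le_left (sum_take_add_le_sumTails_sigmaL a _))

theorem getD_sigmaL_eq_zero_of_sum_eq {a : List ℕ} (ha : 2 ≤ a.length)
    (hsum : a.sum = mOf (sigmaL a)) : (sigmaL a).getD (a.length / 2) 0 = 0 := by
  have hle := sum_take_add_le_sumTails_sigmaL a (a.length + (sigmaL a).length)
  rw [sumTails_eq_mOf (by omega), List.take_of_length_le (by omega), hsum] at hle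
  have hmul := Nat.le_zero.1 ((Nat.add_le_add_iff_left (n := mOf (sigmaL a))).1 hle)
  exact (mul_eq_zero.1 hmul).resolve_left (by omega)

/-! ### The tuple `𝔥` -/

/-- The tuple `𝔥 = (h_0, …, h_{N-1})` attached to the signature `ds`. It is indexed by its number
of entries `N = n + 1`, so that `N = 0` is allowed. -/
def highestWeight (N : ℕ) (ds : List ℕ) : List ℕ :=
  (List.range N).map fun i => if i % 2 = 0 then (ds.drop (i / 2)).sum else 0

section highestWeight

variable {N : ℕ} {ds : List ℕ}

theorem length_highestWeight (N : ℕ) (ds : List ℕ) : (highestWeight N ds).length = N := by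
  rw [highestWeight, List.length_map, List.length_range]

theorem drop_highestWeight (N : ℕ) (ds : List ℕ) (e : ℕ) :
    (highestWeight N ds).drop (2 * e) = highestWeight (N - 2 * e) (ds.drop e) := by
  refine List.ext_getElem (by simp [highestWeight]) fun i _ _ => ?_
  simp [highestWeight, Nat.add_div_of_dvd_right]

theorem getD_highestWeight (hds : ds.length ≤ (N + 1) / 2) (i : ℕ) :
    (highestWeight N ds).getD i 0 = if i % 2 = 0 then (ds.drop (i / 2)).sum else 0 := by
  rcases lt_or_ge i N with hi | hi
  · rw [List.getD_eq_getElem _ _ (by rwa [length_highestWeight])]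
    simp only [highestWeight, List.getElem_map, List.getElem_range]
  · rw [List.getD_eq_default _ _ (by rwa [length_highestWeight])]
    split_ifs with heven
    · rw [List.drop_eq_nil_of_le (by omega), List.sum_nil]
    · rfl

theorem sum_take_highestWeight (hds : ds.length ≤ (N + 1) / 2) (j : ℕ) :
    ((highestWeight N ds).take j).sum = sumTails ds ((j + 1) / 2) := by
  induction j with
  | zero => rfl
  | succ j ih =>
    rw [sum_take_succ_getD, ih, getD_highestWeight hds]
    split_ifs with heven
    · rw [show (j + 1 + 1) / 2 = j / 2 + 1 by omega, sumTails_succ,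
        show (j + 1) / 2 = j / 2 by omega]
    · rw [show (j + 1 + 1) / 2 = (j + 1) / 2 by omega, add_zero]

theorem sum_highestWeight (hds : ds.length ≤ (N + 1) / 2) : (highestWeight N ds).sum = mOf ds := by
  rw [← sumTails_eq_mOf hds, ← sum_take_highestWeight hds, List.take_of_length_le
    (length_highestWeight N ds).le]

theorem getD_add_getD_succ_highestWeight (hds : ds.length ≤ (N + 1) / 2) (i : ℕ) :
    (highestWeight N ds).getD i 0 + (highestWeight N ds).getD (i + 1) 0 =
      (ds.drop ((i + 1) / 2)).sum := by
  rw [getD_highestWeight hds, getD_highestWeight hds]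
  rcases Nat.mod_two_eq_zero_or_one i with hi | hi
  · rw [if_pos hi, if_neg (by omega), add_zero, show (i + 1) / 2 = i / 2 by omega]
  · rw [if_neg (by omega), if_pos (by omega), zero_add]

theorem sprL_highestWeight (hds : ds.length ≤ (N + 1) / 2) (hlast : ds.getD (N / 2) 0 = 0) :
    sprL (highestWeight N ds) = ds.sum := by
  apply le_antisymm
  · refine Finset.sup_le fun i _ => ?_
    rw [getD_add_getD_succ_highestWeight hds]
    exact sum_drop_le_sum ds _
  rcases le_or_gt 2 N with hN | hN
  · have hmem : 0 ∈ Finset.range ((highestWeight N ds).length - 1) := by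
      rw [length_highestWeight, Finset.mem_range]
      omega
    refine le_of_eq_of_le ?_ (Finset.le_sup hmem)
    exact (getD_add_getD_succ_highestWeight hds 0).symm
  · have hsum : ds.sum = 0 := by
      rw [Nat.div_eq_of_lt hN] at hlast
      rw [← List.take_of_length_le (by omega : ds.length ≤ 0 + 1), sum_take_succ_getD, hlast]
      rfl
    exact hsum ▸ Nat.zero_le _

theorem mem_Mset_highestWeight (hds : ds.length ≤ (N + 1) / 2) (hlast : ds.getD (N / 2) 0 = 0)
    {i : ℕ} : i ∈ Mset (highestWeight N ds) ↔
      i + 1 < N ∧ (ds.drop ((i + 1) / 2)).sum = ds.sum := by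
  rw [mem_Mset, getD_add_getD_succ_highestWeight hds, sprL_highestWeight hds hlast,
    length_highestWeight]

theorem exists_isMaximalInterval_Mset_highestWeight (hds : ds.length ≤ (N + 1) / 2)
    (hlast : ds.getD (N / 2) 0 = 0) (hN : 2 ≤ N) :
    ∃ l, IsMaximalInterval (Mset (highestWeight N ds)) 0 l ∧
      ∀ i ∈ Mset (highestWeight N ds), i < l := by
  have hM {i : ℕ} := mem_Mset_highestWeight hds hlast (i := i)
  obtain ⟨l, h⟩ := exists_isMaximalInterval (hM.2 ⟨hN, rfl⟩) (Or.inl rfl)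
  refine ⟨l, h, fun i hi => ?_⟩
  by_contra! hli
  obtain ⟨hiN, hisum⟩ := hM.1 hi
  exact h.right_notMem (hM.2 ⟨by omega, sum_drop_eq_sum_of_le hisum (by omega)⟩)

theorem omegaL_highestWeight (hds : ds.length ≤ (N + 1) / 2) (hlast : ds.getD (N / 2) 0 = 0)
    (hN : 2 ≤ N) :
    omegaL (highestWeight N ds) =
        highestWeight (N - 2 * ecdL (highestWeight N ds)) (ds.drop (ecdL (highestWeight N ds))) ∧
      (ds.drop (ecdL (highestWeight N ds) - 1)).sum = ds.sum := by
  obtain ⟨l, h, hl⟩ := exists_isMaximalInterval_Mset_highestWeight hds hlast hN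
  have hM {i : ℕ} := mem_Mset_highestWeight hds hlast (i := i)
  have hlen := length_highestWeight N ds
  have hpos := h.pos
  have hsum : (ds.drop (l / 2)).sum = ds.sum := by
    have := (hM.1 (h.mem (l - 1) (by omega) (by omega))).2
    rwa [Nat.sub_add_cancel hpos] at this
  rw [h.ecdL_eq hl, h.omegaL_eq hl, ← drop_highestWeight]
  refine ⟨?_, sum_drop_eq_sum_of_le hsum (by omega)⟩
  rcases Nat.even_or_odd' l with ⟨m, rfl | rfl⟩
  · rw [Nat.mul_div_cancel_left m two_pos] at hsum
    -- An even interval `{0, …, 2m-1}` can only be cut off by the end of the tuple, and then `ω(𝔥)`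
    -- is the retained entry `h_0 = h_{2m}`.
    have hN : N ≤ 2 * m + 1 := by
      by_contra! hlt
      refine h.right_notMem (hM.2 ⟨by omega, ?_⟩)
      rwa [show (0 + 2 * m + 1) / 2 = m by omega]
    have hretained : (highestWeight N ds).getD 0 0 = (highestWeight N ds).getD (2 * m) 0 := by
      rw [getD_highestWeight hds, getD_highestWeight hds, if_pos rfl, if_pos (by omega),
        Nat.mul_div_cancel_left m two_pos, hsum]
      rfl
    have hlt := h.add_lt_length
    rw [if_pos (even_two_mul m), hretained, List.singleton_append,
      ← drop_eq_getD_cons (by omega), show 2 * ((2 * m + 1) / 2) = 2 * m by omega]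
  · rw [if_neg (Nat.not_even_two_mul_add_one m), List.nil_append,
      show 2 * ((2 * m + 1 + 1) / 2) = 2 * m + 1 + 1 by omega]

theorem replicate_append_cons_drop_eq {j : ℕ} (hj : j < ds.length)
    (hsum : (ds.drop j).sum = ds.sum) :
    List.replicate j 0 ++ (ds.sum - (ds.drop (j + 1)).sum) :: ds.drop (j + 1) = ds := by
  have htake : ds.take j = List.replicate j 0 := by
    refine List.eq_replicate_iff.2 ⟨List.length_take_of_le hj.le, List.sum_eq_zero_iff.1 ?_⟩
    have := List.sum_take_add_sum_drop ds j
    omega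
  have hentry : ds.sum - (ds.drop (j + 1)).sum = ds.getD j 0 := by
    rw [← hsum, drop_eq_getD_cons hj, List.sum_cons, Nat.add_sub_cancel]
  rw [hentry, ← htake, ← drop_eq_getD_cons hj, List.take_append_drop]

theorem sigmaL_highestWeight {N : ℕ} {ds : List ℕ} (hds : ds.length = (N + 1) / 2)
    (hlast : ds.getD (N / 2) 0 = 0) : sigmaL (highestWeight N ds) = ds := by
  have hlen := length_highestWeight N ds
  rcases lt_or_ge 2 N with hN | hN
  · set e := ecdL (highestWeight N ds) with he
    have hepos : 0 < e := ecdL_pos (by omega)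
    have helen := length_eq_add_length_omegaL (highestWeight N ds)
    obtain ⟨homega, hsum⟩ := omegaL_highestWeight hds.le hlast hN.le
    rw [← he] at helen homega hsum
    have hds' : (ds.drop e).length = (N - 2 * e + 1) / 2 := by
      rw [List.length_drop]
      omega
    have hlast' : (ds.drop e).getD ((N - 2 * e) / 2) 0 = 0 := by
      rw [getD_drop, show e + (N - 2 * e) / 2 = N / 2 by omega, hlast]
    rw [sigmaL_eq (by omega), homega, sigmaL_highestWeight hds' hlast',
      sprL_highestWeight hds.le hlast, sprL_highestWeight hds'.le hlast', ← he]
    obtain ⟨j, hj⟩ := Nat.exists_eq_succ_of_ne_zero hepos.ne'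
    rw [hj, Nat.succ_sub_one] at hsum ⊢
    exact replicate_append_cons_drop_eq (by omega) hsum
  · interval_cases N
    · rw [List.length_eq_zero_iff.1 hds]
      rfl
    · obtain ⟨d, rfl⟩ := List.length_eq_one_iff.1 hds
      simp [highestWeight, sigmaL_singleton]
    · obtain ⟨d, rfl⟩ := List.length_eq_one_iff.1 hds
      simp [highestWeight, List.range_succ, sigmaL_pair]
termination_by N

end highestWeight

theorem getD_eq_zero_of_mem_Qset {n : ℕ} {ds a : List ℕ} (hn : n ≠ 0) (ha : a ∈ Qset n ds) :
    ds.getD ((n + 1) / 2) 0 = 0 := by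
  obtain ⟨hlen, hsum, rfl⟩ := ha
  rw [← hlen]
  exact getD_sigmaL_eq_zero_of_sum_eq (by omega) hsum

theorem sigmaL_highestWeight_of_mem_Qset {n : ℕ} {ds a : List ℕ} (hds : ds.length = n / 2 + 1)
    (ha : a ∈ Qset n ds) : sigmaL (highestWeight (n + 1) ds) = ds := by
  rcases eq_or_ne n 0 with rfl | hn
  · obtain ⟨d, rfl⟩ := List.length_eq_one_iff.1 hds
    simp [highestWeight, sigmaL_singleton]
  · exact sigmaL_highestWeight (by omega) (getD_eq_zero_of_mem_Qset hn ha)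

theorem sum_take_le_sum_take_highestWeight {n : ℕ} {ds a : List ℕ}
    (hds : ds.length = n / 2 + 1) (ha : a ∈ Qset n ds) (j : ℕ) :
    (a.take j).sum ≤ ((highestWeight (n + 1) ds).take j).sum := by
  rw [sum_take_highestWeight (by omega), ← ha.2.2]
  exact sum_take_le_sumTails_sigmaL a j

end OHara

open OHara in
/-- `Q_n(d_0,…,d_k)` has a unique element of minimal rank (equivalently, highest weight),
namely `𝔥 = (h_0,…,h_n)` with `h_i = 0` for odd `i` and `h_{2i} = d_i + d_{i+1} + ⋯ + d_k`. -/
theorem unique_highest_weight_element (n : ℕ)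
    (ds : List ℕ) (hdsl : ds.length = n / 2 + 1)
    (hQ : (Qset n ds).Nonempty)
    (h : List ℕ)
    (hh : h = (List.range (n + 1)).map
      (fun i => if i % 2 = 0 then (ds.drop (i / 2)).sum else 0)) :
    h ∈ Qset n ds ∧ ∀ a ∈ Qset n ds, a ≠ h → rkL h < rkL a := by
  obtain ⟨b, hb⟩ := hQ
  have hlen : h.length = n + 1 := hh ▸ length_highestWeight (n + 1) ds
  have hsum : h.sum = mOf ds := hh ▸ sum_highestWeight (by omega)
  have hsigma : sigmaL h = ds := hh ▸ sigmaL_highestWeight_of_mem_Qset hdsl hb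
  refine ⟨⟨hlen, hsum, hsigma⟩, fun a ha hne => ?_⟩
  refine rkL_lt_of_sum_take_le (ha.1.trans hlen.symm) (ha.2.1.trans hsum.symm) (fun j => ?_) hne
  exact hh ▸ sum_take_le_sum_take_highestWeight hdsl ha j
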